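/- For all f, g ∈ L¹(ℝ³), ‖(1/p⁰)Q⁺(f,f) − (1/p⁰)Q⁺(g,g)‖ ≤ C(‖f‖ + ‖g‖)·‖f − g‖. -/

import Mathlib

/-!
By bilinearity, `f(p′)f(q′) - g(p′)g(q′) = f(p′)(f - g)(q′) + (f - g)(p′)g(q′)`, so with `S₀ ≤ C₁`
it suffices to bound `∫∫∫ u(p′) w(q′) / (p⁰ q⁰) dω dq dp` by `4π ‖u‖ ‖w‖` for nonnegative `u`, `w`
(`lintegral_gain_le`). This follows from the invariance of `dp dq / (p⁰ q⁰)` under the collision map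
for each fixed `ω` (`lintegral_pre_post`), together with `p⁰, q⁰ ≥ 1`.

The invariance is proved without computing a Jacobian. Write `p = s ω̂ + k`, `q = t ω̂ + l` with
`k`, `l` orthogonal to `ω̂`. The collision fixes `k` and `l` and acts on `(s, t)` as an elastic
collision on the line of particles with masses `m = √(1 + |k|²)` and `n = √(1 + |l|²)`
(`collC_split`). In rapidities, `s = m sinh x`, `t = n sinh y`, the measure `ds dt / (p⁰ q⁰)` is
`dx dy` (`lintegral_rapidity`) and the collision is the reflection `(x, y) ↦ (2z - x, 2z - y)` about
the centre-of-mass rapidity `z` (`collC1_rapidity`). As `z - y` depends on `x - y` only, this is a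
composition of shears and a sign change, hence preserves `dx dy` (`lintegral_reflect`).

The same bound shows that the gain integrand is integrable in `(q, ω)` for almost every `p`
(`integrable_gainF`), so that the difference of the two gain terms may be taken under the integral.
-/

open MeasureTheory Real

noncomputable section

/-- Momentum space `ℝ³`. -/
abbrev E3 : Type := EuclideanSpace ℝ (Fin 3)

/-- The scalar product associated with the Bianchi type I metric coefficients `α = a(t)`,
`β = b(t)`: `p̄·q̄ = α²p¹q¹ + β²(p²q² + p³q³)`. -/
def mdot (α β : ℝ) (p q : E3) : ℝ :=
  α ^ 2 * p 0 * q 0 + β ^ 2 * (p 1 * q 1 + p 2 * q 2)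

/-- `p⁰ = √(1 + |p̄|²)` where `|p̄|² = p̄·p̄`. -/
def pZ (α β : ℝ) (p : E3) : ℝ := Real.sqrt (1 + mdot α β p p)

/-- `ω` normalized to unit length for the metric norm. -/
def omHat (α β : ℝ) (ω : E3) : E3 := (Real.sqrt (mdot α β ω ω))⁻¹ • ω

/-- The total energy `e = p⁰ + q⁰`. -/
def collE (α β : ℝ) (p q : E3) : ℝ := pZ α β p + pZ α β q

/-- The function `C(p̄, q̄, ω)` of Glassey's representation of post-collisional momenta. -/
def collC (α β : ℝ) (p q ω : E3) : ℝ :=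
  2 * pZ α β p * pZ α β q * collE α β p q *
      mdot α β (omHat α β ω) ((pZ α β q)⁻¹ • q - (pZ α β p)⁻¹ • p) /
    (collE α β p q ^ 2 - mdot α β (omHat α β ω) (p + q) ^ 2)

/-- The post-collisional momentum `p̄′ = p̄ + C(p̄,q̄,ω)ω̂`. -/
def pPr (α β : ℝ) (p q ω : E3) : E3 := p + collC α β p q ω • omHat α β ω

/-- The post-collisional momentum `q̄′ = q̄ − C(p̄,q̄,ω)ω̂`. -/
def qPr (α β : ℝ) (p q ω : E3) : E3 := q - collC α β p q ω • omHat α β ω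

/-- The surface measure on the unit sphere `S² ⊂ ℝ³`. -/
def sphMeas : Measure (Metric.sphere (0 : E3) 1) := (volume : Measure E3).toSphere

/-- The gain term `Q⁺(f,g)`. -/
def Qplus (α β : ℝ) (S₀ : E3 → E3 → E3 → E3 → ℝ) (f g : E3 → ℝ) (p : E3) : ℝ :=
  α * β ^ 2 *
    ∫ q : E3, (pZ α β q)⁻¹ *
      ∫ ω : Metric.sphere (0 : E3) 1,
        f (pPr α β p q ω) * g (qPr α β p q ω) *
          S₀ p q (pPr α β p q ω) (qPr α β p q ω) ∂sphMeas

/-- The loss term `Q⁻(f,g)`. -/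
def Qminus (α β : ℝ) (S₀ : E3 → E3 → E3 → E3 → ℝ) (f g : E3 → ℝ) (p : E3) : ℝ :=
  α * β ^ 2 *
    ∫ q : E3, (pZ α β q)⁻¹ *
      ∫ ω : Metric.sphere (0 : E3) 1,
        f p * g q * S₀ p q (pPr α β p q ω) (qPr α β p q ω) ∂sphMeas

/-- The collision operator `Q = Q⁺ − Q⁻`. -/
def Qcoll (α β : ℝ) (S₀ : E3 → E3 → E3 → E3 → ℝ) (f g : E3 → ℝ) (p : E3) : ℝ :=
  Qplus α β S₀ f g p - Qminus α β S₀ f g p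

/-- The space `L¹(ℝ³)`. -/
abbrev L1 : Type := Lp ℝ 1 (volume : Measure E3)

/-- Membership in `X_r = {f ∈ L¹(ℝ³) : f ≥ 0 a.e., ‖f‖ ≤ r}`. -/
def memX (r : ℝ) (f : L1) : Prop := (0 ≤ᵐ[volume] ⇑f) ∧ ‖f‖ ≤ r

end

/-! ### One-dimensional collisions in rapidity coordinates -/

/-- The inverse energy `1/√(m² + s²)` of a one-dimensional particle of mass `m` and momentum `s`. -/
noncomputable def wt (m s : ℝ) : ENNReal := ENNReal.ofReal (Real.sqrt (m ^ 2 + s ^ 2))⁻¹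

lemma sqrt_rapidity {m : ℝ} (hm : 0 < m) (x : ℝ) :
    Real.sqrt (m ^ 2 + (m * Real.sinh x) ^ 2) = m * Real.cosh x := by
  rw [show m ^ 2 + (m * Real.sinh x) ^ 2 = (m * Real.cosh x) ^ 2 by
    rw [mul_pow, mul_pow, Real.cosh_sq]; ring]
  exact Real.sqrt_sq (by have := Real.cosh_pos x; positivity)

/-- The substitution `s = m sinh x` turns the invariant measure `ds/√(m² + s²)` into `dx`. -/
lemma lintegral_rapidity {m : ℝ} (hm : 0 < m) (G : ℝ → ENNReal) :
    ∫⁻ s, G s * wt m s = ∫⁻ x, G (m * Real.sinh x) := by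
  have hinj : Set.InjOn (fun x => m * Real.sinh x) Set.univ := fun x _ y _ h =>
    Real.sinh_injective (mul_left_cancel₀ hm.ne' h)
  have himg : (fun x => m * Real.sinh x) '' Set.univ = Set.univ := by
    rw [Set.image_univ, Set.range_eq_univ]
    intro s
    obtain ⟨x, hx⟩ := Real.sinh_surjective (s / m)
    exact ⟨x, by simp only [hx]; field_simp⟩
  have key := lintegral_image_eq_lintegral_abs_deriv_mul (s := Set.univ)
    (f := fun x => m * Real.sinh x) (f' := fun x => m * Real.cosh x) MeasurableSet.univ
    (fun x _ => ((Real.hasDerivAt_sinh x).const_mul m).hasDerivWithinAt) hinj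
    (fun s => G s * wt m s)
  rw [himg, Measure.restrict_univ] at key
  rw [key]
  refine lintegral_congr fun x => ?_
  have hpos : 0 < m * Real.cosh x := mul_pos hm (Real.cosh_pos x)
  rw [wt, sqrt_rapidity hm, abs_of_pos hpos, mul_left_comm, ← ENNReal.ofReal_mul hpos.le,
    mul_inv_cancel₀ hpos.ne', ENNReal.ofReal_one, mul_one]

/-- Lebesgue measure on the plane is invariant under `(x, y) ↦ (2z - x, 2z - y)` whenever
`z = y + h (x - y)`: in the variables `(x - y, z)`, a shear of `(x, y)`, this map is
`(u, z) ↦ (-u, z)`. -/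
lemma lintegral_reflect (h : ℝ → ℝ) (hh : Measurable h) (H : ℝ → ℝ → ENNReal)
    (hH : Measurable fun z : ℝ × ℝ => H z.1 z.2) :
    ∫⁻ y, ∫⁻ x, H (2 * (y + h (x - y)) - x) (2 * (y + h (x - y)) - y) = ∫⁻ y, ∫⁻ x, H x y := by
  calc ∫⁻ y, ∫⁻ x, H (2 * (y + h (x - y)) - x) (2 * (y + h (x - y)) - y)
      = ∫⁻ y, ∫⁻ u, H (y + 2 * h u - u) (y + 2 * h u) := by
        refine lintegral_congr fun y => ?_
        rw [← lintegral_add_right_eq_self _ y]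
        refine lintegral_congr fun u => ?_
        rw [add_sub_cancel_right]; congr 1 <;> ring
    _ = ∫⁻ u, ∫⁻ y, H (y + 2 * h u - u) (y + 2 * h u) := by
        apply lintegral_lintegral_swap
        apply Measurable.aemeasurable
        exact hH.comp (f := fun z : ℝ × ℝ => (z.1 + 2 * h z.2 - z.2, z.1 + 2 * h z.2))
          (by fun_prop)
    _ = ∫⁻ u, ∫⁻ y, H (y - u) y := lintegral_congr fun u =>
        lintegral_add_right_eq_self (fun y => H (y - u) y) (2 * h u)
    _ = ∫⁻ y, ∫⁻ u, H (y - u) y := by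
        apply lintegral_lintegral_swap
        apply Measurable.aemeasurable
        exact hH.comp (f := fun z : ℝ × ℝ => (z.2 - z.1, z.2)) (by fun_prop)
    _ = ∫⁻ y, ∫⁻ x, H x y := lintegral_congr fun y =>
        lintegral_sub_left_eq_self (fun x => H x y) y

/-- The momentum transferred in a one-dimensional elastic collision of relativistic particles with
masses `m`, `n` and momenta `s`, `t`. -/
noncomputable def collC1 (m n s t : ℝ) : ℝ :=
  2 * (Real.sqrt (m ^ 2 + s ^ 2) + Real.sqrt (n ^ 2 + t ^ 2)) *
      (Real.sqrt (m ^ 2 + s ^ 2) * t - Real.sqrt (n ^ 2 + t ^ 2) * s) /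
    ((Real.sqrt (m ^ 2 + s ^ 2) + Real.sqrt (n ^ 2 + t ^ 2)) ^ 2 - (s + t) ^ 2)

/-- The rapidity of the centre-of-mass frame of two particles with masses `m`, `n` and rapidities
`u`, `0`. -/
noncomputable def hshift (m n u : ℝ) : ℝ :=
  Real.log ((m * Real.exp u + n) / (m * Real.exp (-u) + n)) / 2

/-- In rapidity coordinates a collision is the reflection of both rapidities about the
centre-of-mass rapidity `y + hshift m n (x - y)`. -/
lemma collC1_rapidity {m n : ℝ} (hm : 0 < m) (hn : 0 < n) (x y : ℝ) :
    m * Real.sinh x + collC1 m n (m * Real.sinh x) (n * Real.sinh y)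
        = m * Real.sinh (2 * (y + hshift m n (x - y)) - x) ∧
    n * Real.sinh y - collC1 m n (m * Real.sinh x) (n * Real.sinh y)
        = n * Real.sinh (2 * (y + hshift m n (x - y)) - y) := by
  have hA : 0 < (m * Real.exp (x - y) + n) / (m * Real.exp (-(x - y)) + n) := by positivity
  have e2 : Real.exp (2 * hshift m n (x - y))
      = (m * Real.exp (x - y) + n) / (m * Real.exp (-(x - y)) + n) := by
    rw [hshift, mul_div_cancel₀ _ (two_ne_zero), Real.exp_log hA]
  have e3 : Real.exp (2 * (y + hshift m n (x - y))) = (m * Real.exp x + n * Real.exp y) /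
      (m * (Real.exp x)⁻¹ + n * (Real.exp y)⁻¹) := by
    rw [mul_add, Real.exp_add, e2, two_mul, Real.exp_add, neg_sub, Real.exp_sub, Real.exp_sub]
    field_simp
  -- `e² - P² = (e + P)(e - P)`
  have hD : (m * Real.cosh x + n * Real.cosh y) ^ 2 - (m * Real.sinh x + n * Real.sinh y) ^ 2
      = (m * Real.exp x + n * Real.exp y) * (m * (Real.exp x)⁻¹ + n * (Real.exp y)⁻¹) := by
    rw [← Real.exp_neg, ← Real.exp_neg, ← Real.cosh_add_sinh, ← Real.cosh_add_sinh,
      ← Real.cosh_sub_sinh, ← Real.cosh_sub_sinh]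
    ring
  have ha := Real.exp_pos x
  have hb := Real.exp_pos y
  unfold collC1
  rw [sqrt_rapidity hm, sqrt_rapidity hn, hD, Real.sinh_eq (_ - x), Real.sinh_eq (_ - y), neg_sub,
    neg_sub, Real.exp_sub, Real.exp_sub, Real.exp_sub, Real.exp_sub, e3, Real.sinh_eq, Real.sinh_eq,
    Real.cosh_eq, Real.cosh_eq, Real.exp_neg, Real.exp_neg]
  generalize Real.exp x = a at *
  generalize Real.exp y = b at *
  constructor <;> · field_simp; ring

/-- A one-dimensional collision preserves `ds dt / (√(m² + s²) √(n² + t²))`. -/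
lemma lintegral_collide {m n : ℝ} (hm : 0 < m) (hn : 0 < n) (F : ℝ → ℝ → ENNReal)
    (hF : Measurable fun z : ℝ × ℝ => F z.1 z.2) :
    ∫⁻ t, (∫⁻ s, F (s + collC1 m n s t) (t - collC1 m n s t) * wt m s) * wt n t
      = ∫⁻ t, (∫⁻ s, F s t * wt m s) * wt n t := by
  simp_rw [lintegral_rapidity hm, lintegral_rapidity hn, (collC1_rapidity hm hn _ _).1,
    (collC1_rapidity hm hn _ _).2]
  refine lintegral_reflect (hshift m n) (by unfold hshift; fun_prop)
    (fun x y => F (m * Real.sinh x) (n * Real.sinh y)) ?_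
  exact hF.comp (f := fun z : ℝ × ℝ => (m * Real.sinh z.1, n * Real.sinh z.2)) (by fun_prop)

/-! ### Splitting momentum space along the collision direction -/

/-- The linear functional `p ↦ v·p` of the metric. -/
noncomputable def mdotL (α β : ℝ) (v : E3) : E3 →ₗ[ℝ] ℝ where
  toFun := mdot α β v
  map_add' x y := by simp [mdot]; ring
  map_smul' c x := by simp [mdot]; ring

/-- Fubini for the splitting of `ℝ³` into the line `ℝ v` and its metric-orthogonal plane. The
constant is the ratio of two Haar measures; its value is irrelevant because it occurs on both sides
of the change of variables. -/
lemma lintegral_split (α β : ℝ) (v : E3) (hv : mdot α β v v = 1) :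
    ∃ c : ENNReal, ∀ G : E3 → ENNReal, Measurable G →
      ∫⁻ p, G p = c * ∫⁻ k : LinearMap.ker (mdotL α β v), ∫⁻ s : ℝ, G (s • v + k) := by
  have hφ : ∀ x, mdotL α β v x = mdot α β v x := fun _ => rfl
  let L : (LinearMap.ker (mdotL α β v) × ℝ) ≃ₗ[ℝ] E3 :=
    { toFun := fun z => z.2 • v + z.1
      map_add' := fun x y => by simp only [Prod.snd_add, Prod.fst_add, Submodule.coe_add]; module
      map_smul' := fun c x => by
        simp only [Prod.smul_snd, Prod.smul_fst, Submodule.coe_smul, RingHom.id_apply, smul_eq_mul]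
        module
      invFun := fun p => (⟨p - mdotL α β v p • v, by
        rw [LinearMap.mem_ker, map_sub, map_smul, hφ v, hv]; simp⟩, mdotL α β v p)
      left_inv := fun ⟨k, s⟩ => by
        have hk : mdotL α β v k = 0 := LinearMap.mem_ker.1 k.2
        have : mdotL α β v (s • v + k) = s := by rw [map_add, map_smul, hφ v, hv, hk]; simp
        ext1
        · apply Subtype.ext; simp only [this]; abel
        · exact this
      right_inv := fun p => by simp }
  let Lc := L.toContinuousLinearEquiv
  have hL : ∀ z, Lc z = z.2 • v + z.1 := fun _ => rfl
  let μ : Measure (LinearMap.ker (mdotL α β v) × ℝ) := (volume : Measure _).prod volume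
  have : (Measure.map Lc μ).IsAddHaarMeasure := Lc.isAddHaarMeasure_map μ
  refine ⟨Measure.addHaarScalarFactor volume (Measure.map Lc μ), fun G hG => ?_⟩
  conv_lhs => rw [Measure.isAddLeftInvariant_eq_smul volume (Measure.map Lc μ)]
  rw [lintegral_smul_measure, lintegral_map hG Lc.continuous.measurable, lintegral_prod]
  · rfl
  · exact (hG.comp Lc.continuous.measurable).aemeasurable

@[fun_prop]
lemma Measurable.mdot {X : Type*} [MeasurableSpace X] {α β : ℝ} {f g : X → E3}
    (hf : Measurable f) (hg : Measurable g) : Measurable fun x => mdot α β (f x) (g x) := by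
  have h : Measurable fun z : E3 × E3 => _root_.mdot α β z.1 z.2 := by unfold _root_.mdot; fun_prop
  exact h.comp (hf.prodMk hg)

@[fun_prop]
lemma Measurable.pZ {X : Type*} [MeasurableSpace X] {α β : ℝ} {f : X → E3}
    (hf : Measurable f) : Measurable fun x => pZ α β (f x) := by
  unfold _root_.pZ; fun_prop

@[fun_prop]
lemma Measurable.collC {X : Type*} [MeasurableSpace X] {α β : ℝ} {f g h : X → E3}
    (hf : Measurable f) (hg : Measurable g) (hh : Measurable h) :
    Measurable fun x => collC α β (f x) (g x) (h x) := by
  unfold _root_.collC omHat collE; fun_prop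

@[fun_prop]
lemma Measurable.pPr {X : Type*} [MeasurableSpace X] {α β : ℝ} {f g h : X → E3}
    (hf : Measurable f) (hg : Measurable g) (hh : Measurable h) :
    Measurable fun x => pPr α β (f x) (g x) (h x) := by
  unfold _root_.pPr omHat; fun_prop

@[fun_prop]
lemma Measurable.qPr {X : Type*} [MeasurableSpace X] {α β : ℝ} {f g h : X → E3}
    (hf : Measurable f) (hg : Measurable g) (hh : Measurable h) :
    Measurable fun x => qPr α β (f x) (g x) (h x) := by
  unfold _root_.qPr omHat; fun_prop

lemma mdot_self_nonneg (α β : ℝ) (p : E3) : 0 ≤ mdot α β p p := by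
  have : mdot α β p p = (α * p 0) ^ 2 + (β * p 1) ^ 2 + (β * p 2) ^ 2 := by unfold mdot; ring
  rw [this]; positivity

lemma one_le_pZ (α β : ℝ) (p : E3) : 1 ≤ pZ α β p :=
  Real.one_le_sqrt.2 (by linarith [mdot_self_nonneg α β p])

/-- The component of the momentum orthogonal to `v` acts as a mass for the motion along `v`. -/
lemma pZ_split {α β : ℝ} {v k : E3} (hv : mdot α β v v = 1) (hk : mdot α β v k = 0) (s : ℝ) :
    pZ α β (s • v + k) = Real.sqrt (pZ α β k ^ 2 + s ^ 2) := by
  have h1 : pZ α β k ^ 2 = 1 + mdot α β k k :=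
    Real.sq_sqrt (by linarith [mdot_self_nonneg α β k])
  have h2 : mdot α β (s • v + k) (s • v + k)
      = s ^ 2 * mdot α β v v + 2 * s * mdot α β v k + mdot α β k k := by
    simp [mdot]; ring
  rw [h1, pZ, h2, hv, hk]
  congr 1; ring

/-- Along the direction `ω̂` a collision is a one-dimensional collision of particles whose masses
are the energies of the transversal components `k`, `l`. -/
lemma collC_split {α β : ℝ} {ω k l : E3} (hv : mdot α β (omHat α β ω) (omHat α β ω) = 1)
    (hk : mdot α β (omHat α β ω) k = 0) (hl : mdot α β (omHat α β ω) l = 0) (s t : ℝ) :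
    collC α β (s • omHat α β ω + k) (t • omHat α β ω + l) ω = collC1 (pZ α β k) (pZ α β l) s t := by
  have hp := one_le_pZ α β (s • omHat α β ω + k)
  have hq := one_le_pZ α β (t • omHat α β ω + l)
  rw [pZ_split hv hk] at hp
  rw [pZ_split hv hl] at hq
  have h1 : ∀ (a b : ℝ) (x y : E3), mdot α β (omHat α β ω) (a • x - b • y)
      = a * mdot α β (omHat α β ω) x - b * mdot α β (omHat α β ω) y := fun a b x y => by
    simp [mdot]; ring
  have h2 : ∀ (x y : E3), mdot α β (omHat α β ω) (x + y)
      = mdot α β (omHat α β ω) x + mdot α β (omHat α β ω) y := fun x y => by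
    simp [mdot]; ring
  have h3 : ∀ (a : ℝ) (x : E3), mdot α β (omHat α β ω) (a • x)
      = a * mdot α β (omHat α β ω) x := fun a x => by
    simp [mdot]; ring
  rw [collC, collE, collC1, pZ_split hv hk, pZ_split hv hl, h1, h2 (s • _ + k), h2 _ k, h2 _ l, h3, h3, hv, hk, hl]
  simp only [mul_one, add_zero]
  congr 1
  field_simp

/-- The weight `1/p⁰` as an extended nonnegative real. -/
noncomputable def wE (α β : ℝ) (p : E3) : ENNReal := ENNReal.ofReal (pZ α β p)⁻¹

@[fun_prop]
lemma Measurable.wE {X : Type*} [MeasurableSpace X] {α β : ℝ} {f : X → E3}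
    (hf : Measurable f) : Measurable fun x => wE α β (f x) := by
  unfold _root_.wE; fun_prop

lemma wE_le_one (α β : ℝ) (p : E3) : wE α β p ≤ 1 :=
  ENNReal.ofReal_le_one.2 (inv_le_one_of_one_le₀ (one_le_pZ α β p))

/-! ### Invariance of `dp dq / (p⁰ q⁰)` and the gain estimate -/

/-- For a fixed direction `ω` the measure `dp dq / (p⁰ q⁰)` is invariant under the collision map
`(p, q) ↦ (p′, q′)`. -/
lemma lintegral_pre_post {α β : ℝ} {ω : E3} (hv : mdot α β (omHat α β ω) (omHat α β ω) = 1)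
    (F : E3 → E3 → ENNReal) (hF : Measurable fun z : E3 × E3 => F z.1 z.2) :
    ∫⁻ q, (∫⁻ p, F (pPr α β p q ω) (qPr α β p q ω) * wE α β p) * wE α β q
      = ∫⁻ q, (∫⁻ p, F p q * wE α β p) * wE α β q := by
  obtain ⟨c, hc⟩ := lintegral_split α β (omHat α β ω) hv
  set v := omHat α β ω with hvdef
  -- integrate first over the components along `v`, then over the transversal components
  have expand : ∀ H : E3 → E3 → ENNReal, (Measurable fun z : E3 × E3 => H z.1 z.2) →
      ∫⁻ q, (∫⁻ p, H p q * wE α β p) * wE α β q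
        = c * ∫⁻ l : LinearMap.ker (mdotL α β v), c * ∫⁻ k : LinearMap.ker (mdotL α β v),
          ∫⁻ t : ℝ, (∫⁻ s : ℝ, H (s • v + k) (t • v + l) * wt (pZ α β k) s) *
            wt (pZ α β l) t := by
    intro H hH
    have hHm : ∀ {X : Type} [MeasurableSpace X] {f g : X → E3}, Measurable f → Measurable g →
        Measurable fun x => H (f x) (g x) := fun hf hg => hH.comp (hf.prodMk hg)
    have hw : ∀ (k : LinearMap.ker (mdotL α β v)) (s : ℝ),
        wE α β (s • v + k) = wt (pZ α β k) s := fun k s => by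
      rw [wE, pZ_split hv (LinearMap.mem_ker.1 k.2), wt]
    have hm1 : Measurable fun z : E3 × E3 => H z.2 z.1 * wE α β z.2 :=
      (hHm measurable_snd measurable_fst).mul (by fun_prop)
    have hm0 : Measurable fun q => (∫⁻ p, H p q * wE α β p) * wE α β q :=
      (hm1.lintegral_prod_right').mul (by fun_prop)
    rw [hc _ hm0]
    congr 1
    refine lintegral_congr fun l => ?_
    have hm2 : Measurable fun z : (ℝ × LinearMap.ker (mdotL α β v)) × ℝ =>
        H (z.2 • v + z.1.2) (z.1.1 • v + l) * wE α β (z.2 • v + z.1.2) :=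
      (hHm (by fun_prop) (by fun_prop)).mul (by fun_prop)
    have hin : ∀ t : ℝ, ∫⁻ p, H p (t • v + l) * wE α β p
        = c * ∫⁻ k : LinearMap.ker (mdotL α β v), ∫⁻ s : ℝ,
            H (s • v + k) (t • v + l) * wE α β (s • v + k) := fun t =>
      hc _ ((hHm measurable_id measurable_const).mul (by fun_prop))
    have hm3 : Measurable fun z : ℝ × LinearMap.ker (mdotL α β v) => ∫⁻ s : ℝ,
            H (s • v + z.2) (z.1 • v + l) * wE α β (s • v + z.2) := hm2.lintegral_prod_right'
    simp_rw [hin, mul_assoc]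
    have hm4 : Measurable fun t : ℝ => (∫⁻ k : LinearMap.ker (mdotL α β v), ∫⁻ s : ℝ,
            H (s • v + k) (t • v + l) * wE α β (s • v + k)) * wE α β (t • v + l) :=
      (hm3.lintegral_prod_right').mul (by fun_prop)
    rw [lintegral_const_mul _ hm4]
    congr 1
    have hpull : ∀ t : ℝ, (∫⁻ k : LinearMap.ker (mdotL α β v), ∫⁻ s : ℝ,
            H (s • v + k) (t • v + l) * wE α β (s • v + k)) * wE α β (t • v + l)
        = ∫⁻ k : LinearMap.ker (mdotL α β v), (∫⁻ s : ℝ,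
            H (s • v + k) (t • v + l) * wE α β (s • v + k)) * wE α β (t • v + l) := fun t =>
      (lintegral_mul_const _ (hm3.comp (measurable_const.prodMk measurable_id))).symm
    simp_rw [hpull]
    rw [lintegral_lintegral_swap ((hm3.mul (by fun_prop)).aemeasurable)]
    simp_rw [hw]
  rw [expand _ hF, expand (fun p q => F (pPr α β p q ω) (qPr α β p q ω))
    (hF.comp (f := fun z : E3 × E3 => (pPr α β z.1 z.2 ω, qPr α β z.1 z.2 ω)) (by fun_prop))]
  congr 1
  refine lintegral_congr fun l => ?_
  congr 1
  refine lintegral_congr fun k => ?_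
  have hp : ∀ s t : ℝ, pPr α β (s • v + k) (t • v + l) ω
      = (s + collC1 (pZ α β k) (pZ α β l) s t) • v + k := fun s t => by
    rw [pPr, collC_split hv (LinearMap.mem_ker.1 k.2) (LinearMap.mem_ker.1 l.2)]; module
  have hq : ∀ s t : ℝ, qPr α β (s • v + k) (t • v + l) ω
      = (t - collC1 (pZ α β k) (pZ α β l) s t) • v + l := fun s t => by
    rw [qPr, collC_split hv (LinearMap.mem_ker.1 k.2) (LinearMap.mem_ker.1 l.2)]; module
  simp_rw [hp, hq]
  exact lintegral_collide (by linarith [one_le_pZ α β k]) (by linarith [one_le_pZ α β l])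
    (fun s t => F (s • v + k) (t • v + l))
    (hF.comp (f := fun z : ℝ × ℝ => (z.1 • v + (k : E3), z.2 • v + (l : E3))) (by fun_prop))

lemma mdot_omHat {α β : ℝ} (hα : 0 < α) (hβ : 0 < β) {ω : E3} (hω : ω ≠ 0) :
    mdot α β (omHat α β ω) (omHat α β ω) = 1 := by
  have hpos : 0 < mdot α β ω ω := by
    have h0 : mdot α β ω ω = (α * ω 0) ^ 2 + (β * ω 1) ^ 2 + (β * ω 2) ^ 2 := by unfold mdot; ring
    refine lt_of_le_of_ne (mdot_self_nonneg α β ω) fun h => hω ?_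
    rw [h0] at h
    have n0 := sq_nonneg (α * ω 0)
    have n1 := sq_nonneg (β * ω 1)
    have n2 := sq_nonneg (β * ω 2)
    have a0 : (α * ω 0) ^ 2 = 0 := by linarith [n0, n1, n2]
    have a1 : (β * ω 1) ^ 2 = 0 := by linarith [n0, n1, n2]
    have a2 : (β * ω 2) ^ 2 = 0 := by linarith [n0, n1, n2]
    simp [hα.ne', hβ.ne'] at a0 a1 a2
    ext i; fin_cases i <;> simp [a0, a1, a2]
  have : mdot α β (omHat α β ω) (omHat α β ω)
      = ((Real.sqrt (mdot α β ω ω)) ^ 2)⁻¹ * mdot α β ω ω := by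
    unfold omHat
    generalize Real.sqrt (mdot α β ω ω) = r
    simp [mdot]; ring
  rw [this, Real.sq_sqrt hpos.le, inv_mul_cancel₀ hpos.ne']

instance : IsFiniteMeasure sphMeas := by unfold sphMeas; infer_instance

lemma sphMeas_univ : sphMeas Set.univ = ENNReal.ofReal (4 * Real.pi) := by
  rw [sphMeas, Measure.toSphere_apply_univ, EuclideanSpace.volume_ball_fin_three]
  simp only [finrank_euclideanSpace, Fintype.card_fin, ENNReal.ofReal_one, one_pow, one_mul]
  rw [show ((3 : ℕ) : ENNReal) = ENNReal.ofReal 3 by simp, ← ENNReal.ofReal_mul (by norm_num)]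
  congr 1; ring

/-- The basic bilinear estimate of the gain term: invariance of `dp dq / (p⁰ q⁰)`, then
`1/p⁰ ≤ 1` and `1/q⁰ ≤ 1`; the sphere contributes its area `4π`. -/
lemma lintegral_gain_le {α β : ℝ} (hα : 0 < α) (hβ : 0 < β) {u w : E3 → ENNReal}
    (hu : Measurable u) (hw : Measurable w) :
    ∫⁻ p, ∫⁻ z : E3 × Metric.sphere (0 : E3) 1, u (pPr α β p z.1 z.2) * w (qPr α β p z.1 z.2) *
        wE α β p * wE α β z.1 ∂((volume : Measure E3).prod sphMeas)
      ≤ ENNReal.ofReal (4 * Real.pi) * ((∫⁻ p, u p) * ∫⁻ q, w q) := by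
  have hmeas : Measurable fun y : (E3 × E3) × Metric.sphere (0 : E3) 1 =>
      u (pPr α β y.1.1 y.1.2 y.2) * w (qPr α β y.1.1 y.1.2 y.2) * wE α β y.1.1 * wE α β y.1.2 := by
    fun_prop
  calc _ = ∫⁻ p, ∫⁻ ω : Metric.sphere (0 : E3) 1, ∫⁻ q,
          u (pPr α β p q ω) * w (qPr α β p q ω) * wE α β p * wE α β q ∂volume ∂sphMeas := by
        refine lintegral_congr fun p => ?_
        exact lintegral_prod_symm' _ (hmeas.comp
          (f := fun z : E3 × Metric.sphere (0 : E3) 1 => ((p, z.1), z.2)) (by fun_prop))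
    _ = ∫⁻ ω : Metric.sphere (0 : E3) 1, ∫⁻ p, ∫⁻ q,
          u (pPr α β p q ω) * w (qPr α β p q ω) * wE α β p * wE α β q ∂volume ∂volume ∂sphMeas := by
        apply lintegral_lintegral_swap
        apply Measurable.aemeasurable
        exact (hmeas.comp (f := fun y : (E3 × Metric.sphere (0 : E3) 1) × E3 =>
          ((y.1.1, y.2), y.1.2)) (by fun_prop)).lintegral_prod_right'
    _ ≤ ∫⁻ ω : Metric.sphere (0 : E3) 1, ((∫⁻ p, u p) * ∫⁻ q, w q) ∂sphMeas := by
        refine lintegral_mono fun ω => ?_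
        have hω : (ω : E3) ≠ 0 := by
          intro h; have := ω.2; simp [h] at this
        calc _ = ∫⁻ q, (∫⁻ p, u (pPr α β p q ω) * w (qPr α β p q ω) * wE α β p) * wE α β q := by
              rw [lintegral_lintegral_swap]
              · refine lintegral_congr fun q => ?_
                exact lintegral_mul_const _ (by fun_prop)
              · apply Measurable.aemeasurable
                exact hmeas.comp (f := fun z : E3 × E3 => (z, ω)) (by fun_prop)
          _ = ∫⁻ q, (∫⁻ p, u p * w q * wE α β p) * wE α β q :=
              lintegral_pre_post (mdot_omHat hα hβ hω) (fun p q => u p * w q) (by fun_prop)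
          _ ≤ ∫⁻ q, ∫⁻ p, u p * w q := by
              refine lintegral_mono fun q => ?_
              refine (mul_le_of_le_one_right' (wE_le_one α β q)).trans ?_
              exact lintegral_mono fun p => mul_le_of_le_one_right' (wE_le_one α β p)
          _ = (∫⁻ p, u p) * ∫⁻ q, w q := by
              simp_rw [lintegral_mul_const _ hu]
              rw [lintegral_const_mul _ hw]
    _ = _ := by rw [lintegral_const, sphMeas_univ, mul_comm]

/-- The integrand of `(1/p⁰) Q⁺(f, f)(p)`, without the factor `αβ²`, as a function of `(q, ω)`. -/
noncomputable def gainF (α β : ℝ) (S₀ : E3 → E3 → E3 → E3 → ℝ) (f : E3 → ℝ) (p : E3)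
    (z : E3 × Metric.sphere (0 : E3) 1) : ℝ :=
  (pZ α β p)⁻¹ * ((pZ α β z.1)⁻¹ * (f (pPr α β p z.1 z.2) * f (qPr α β p z.1 z.2) *
    S₀ p z.1 (pPr α β p z.1 z.2) (qPr α β p z.1 z.2)))

lemma measurable_gainF {α β : ℝ} {S₀ : E3 → E3 → E3 → E3 → ℝ} {f : E3 → ℝ}
    (hS : Measurable fun x : (E3 × E3) × E3 × E3 => S₀ x.1.1 x.1.2 x.2.1 x.2.2)
    (hf : Measurable f) :
    Measurable fun y : E3 × E3 × Metric.sphere (0 : E3) 1 => gainF α β S₀ f y.1 y.2 := by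
  have h := hS.comp (f := fun y : E3 × E3 × Metric.sphere (0 : E3) 1 =>
    ((y.1, y.2.1), pPr α β y.1 y.2.1 y.2.2, qPr α β y.1 y.2.1 y.2.2)) (by fun_prop)
  have h' : Measurable fun y : E3 × E3 × Metric.sphere (0 : E3) 1 =>
    S₀ y.1 y.2.1 (pPr α β y.1 y.2.1 y.2.2) (qPr α β y.1 y.2.1 y.2.2) := h
  unfold gainF
  exact Measurable.mul (by fun_prop) (Measurable.mul (by fun_prop)
    (Measurable.mul (by fun_prop) h'))


lemma integrable_gainF {C₁ α β : ℝ} (hα : 0 < α) (hβ : 0 < β)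
    {S₀ : E3 → E3 → E3 → E3 → ℝ} {f : E3 → ℝ}
    (hS : Measurable fun x : (E3 × E3) × E3 × E3 => S₀ x.1.1 x.1.2 x.2.1 x.2.2)
    (hS0 : ∀ p q p' q', 0 ≤ S₀ p q p' q') (hS1 : ∀ p q p' q', S₀ p q p' q' ≤ C₁)
    (hf : Measurable f) (hfi : Integrable f) :
    ∀ᵐ p, Integrable (gainF α β S₀ f p) ((volume : Measure E3).prod sphMeas) := by
  have hm := measurable_gainF (α := α) (β := β) hS hf
  suffices h : Integrable (fun y : E3 × E3 × Metric.sphere (0 : E3) 1 => gainF α β S₀ f y.1 y.2)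
      ((volume : Measure E3).prod ((volume : Measure E3).prod sphMeas)) from h.prod_right_ae
  refine ⟨hm.aestronglyMeasurable, ?_⟩
  rw [HasFiniteIntegral, lintegral_prod _ hm.enorm.aemeasurable]
  calc _ ≤ ∫⁻ p, ∫⁻ z : E3 × Metric.sphere (0 : E3) 1,
        (ENNReal.ofReal C₁ * ‖f (pPr α β p z.1 z.2)‖ₑ) * ‖f (qPr α β p z.1 z.2)‖ₑ *
        wE α β p * wE α β z.1 ∂((volume : Measure E3).prod sphMeas) := by
        refine lintegral_mono fun p => lintegral_mono fun z => ?_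
        have h1 : ∀ p, ‖(pZ α β p)⁻¹‖ₑ = wE α β p := fun p =>
          Real.enorm_of_nonneg (inv_nonneg.2 (by linarith [one_le_pZ α β p]))
        simp only [gainF, enorm_mul, h1]
        have h2 : ‖S₀ p z.1 (pPr α β p z.1 z.2) (qPr α β p z.1 z.2)‖ₑ ≤ ENNReal.ofReal C₁ := by
          rw [Real.enorm_of_nonneg (hS0 _ _ _ _)]
          exact ENNReal.ofReal_le_ofReal (hS1 _ _ _ _)
        calc _ ≤ wE α β p * (wE α β z.1 * (‖f (pPr α β p z.1 z.2)‖ₑ *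
                ‖f (qPr α β p z.1 z.2)‖ₑ * ENNReal.ofReal C₁)) := by gcongr
          _ = _ := by ring
    _ ≤ ENNReal.ofReal (4 * Real.pi) *
        ((∫⁻ p, ENNReal.ofReal C₁ * ‖f p‖ₑ) * ∫⁻ q, ‖f q‖ₑ) :=
        lintegral_gain_le hα hβ (u := fun p => ENNReal.ofReal C₁ * ‖f p‖ₑ) (w := fun q => ‖f q‖ₑ)
          (by fun_prop) (by fun_prop)
    _ < ⊤ := by
        rw [lintegral_const_mul _ hf.enorm]
        have := hfi.2
        rw [HasFiniteIntegral] at this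
        finiteness

/-- Integrability allows the iterated integral in `Q⁺` to be read as a single integral over
`(q, ω)`. -/
lemma integral_gainF {α β : ℝ} {S₀ : E3 → E3 → E3 → E3 → ℝ} {f : E3 → ℝ} {p : E3}
    (h : Integrable (gainF α β S₀ f p) ((volume : Measure E3).prod sphMeas)) :
    (pZ α β p)⁻¹ * Qplus α β S₀ f f p
      = α * β ^ 2 * ∫ z, gainF α β S₀ f p z ∂((volume : Measure E3).prod sphMeas) := by
  rw [integral_prod _ h, Qplus]
  simp only [gainF, integral_const_mul]
  ring

/-- Pointwise form of `f f - g g = f (f - g) + (f - g) g`, evaluated at `p′` and `q′`. -/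
lemma enorm_gainF_sub_le {C₁ α β : ℝ} {S₀ : E3 → E3 → E3 → E3 → ℝ} (f g : E3 → ℝ)
    (hS0 : ∀ p q p' q', 0 ≤ S₀ p q p' q') (hS1 : ∀ p q p' q', S₀ p q p' q' ≤ C₁)
    (p : E3) (z : E3 × Metric.sphere (0 : E3) 1) :
    ‖gainF α β S₀ f p z - gainF α β S₀ g p z‖ₑ ≤ ENNReal.ofReal C₁ *
      (‖f (pPr α β p z.1 z.2)‖ₑ * ‖(f - g) (qPr α β p z.1 z.2)‖ₑ * wE α β p * wE α β z.1 +
       ‖(f - g) (pPr α β p z.1 z.2)‖ₑ * ‖g (qPr α β p z.1 z.2)‖ₑ * wE α β p * wE α β z.1) := by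
  have h1 : ∀ p, ‖(pZ α β p)⁻¹‖ₑ = wE α β p := fun p =>
    Real.enorm_of_nonneg (inv_nonneg.2 (by linarith [one_le_pZ α β p]))
  have h2 : ‖S₀ p z.1 (pPr α β p z.1 z.2) (qPr α β p z.1 z.2)‖ₑ ≤ ENNReal.ofReal C₁ := by
    rw [Real.enorm_of_nonneg (hS0 _ _ _ _)]
    exact ENNReal.ofReal_le_ofReal (hS1 _ _ _ _)
  have h3 : gainF α β S₀ f p z - gainF α β S₀ g p z =
      S₀ p z.1 (pPr α β p z.1 z.2) (qPr α β p z.1 z.2) *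
      ((f (pPr α β p z.1 z.2) * (f - g) (qPr α β p z.1 z.2) +
        (f - g) (pPr α β p z.1 z.2) * g (qPr α β p z.1 z.2)) * (pZ α β p)⁻¹ * (pZ α β z.1)⁻¹) := by
    simp only [gainF, Pi.sub_apply]; ring
  rw [h3]
  simp only [enorm_mul, h1]
  rw [← add_mul, ← add_mul]
  gcongr
  exact (enorm_add_le _ _).trans (by rw [enorm_mul, enorm_mul])

theorem statement_2
    (C₀ C₁ α β : ℝ) (hC₀ : 0 < C₀) (hC₁ : 0 < C₁) (hα : C₀ ≤ α) (hβ : C₀ ≤ β)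
    (S₀ : E3 → E3 → E3 → E3 → ℝ)
    (hS₀meas : Measurable fun x : (E3 × E3) × E3 × E3 => S₀ x.1.1 x.1.2 x.2.1 x.2.2)
    (hS₀nonneg : ∀ p q p' q', 0 ≤ S₀ p q p' q')
    (hS₀bdd : ∀ p q p' q', S₀ p q p' q' ≤ C₁)
    (hS₀symm : ∀ p q p' q', S₀ p q p' q' = S₀ p' q' p q)
    (f g : L1) :
    ∫ p : E3, |(pZ α β p)⁻¹ * Qplus α β S₀ (⇑f) (⇑f) p -
        (pZ α β p)⁻¹ * Qplus α β S₀ (⇑g) (⇑g) p| ≤ 4 * Real.pi * C₁ * α * β ^ 2 * (‖f‖ + ‖g‖) * ‖f - g‖ := by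
  have hα' : 0 < α := hC₀.trans_le hα
  have hβ' : 0 < β := hC₀.trans_le hβ
  have hf : Measurable f := (Lp.stronglyMeasurable f).measurable
  have hg : Measurable g := (Lp.stronglyMeasurable g).measurable
  have hd : Measurable (⇑f - ⇑g) := hf.sub hg
  have hnorm : ∀ h : L1, ∫⁻ p, ‖h p‖ₑ = ENNReal.ofReal ‖h‖ := fun h => by
    rw [ofReal_norm, Lp.enorm_def, eLpNorm_one_eq_lintegral_enorm]
  have hnormd : ∫⁻ p, ‖(⇑f - ⇑g) p‖ₑ = ENNReal.ofReal ‖f - g‖ := by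
    rw [← hnorm]
    refine lintegral_congr_ae ?_
    filter_upwards [Lp.coeFn_sub f g] with p hp
    rw [hp]
  have hmf := measurable_gainF (α := α) (β := β) hS₀meas hf
  have hmg := measurable_gainF (α := α) (β := β) hS₀meas hg
  have hc : 0 ≤ α * β ^ 2 := by positivity
  have hbound : ∫⁻ p, ENNReal.ofReal ‖|(pZ α β p)⁻¹ * Qplus α β S₀ (⇑f) (⇑f) p -
        (pZ α β p)⁻¹ * Qplus α β S₀ (⇑g) (⇑g) p|‖
      ≤ ENNReal.ofReal (4 * Real.pi * C₁ * α * β ^ 2 * (‖f‖ + ‖g‖) * ‖f - g‖) := by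
    calc _ ≤ ∫⁻ p, ENNReal.ofReal (α * β ^ 2) * (ENNReal.ofReal C₁ *
          ((∫⁻ z : E3 × Metric.sphere (0 : E3) 1, ‖f (pPr α β p z.1 z.2)‖ₑ *
            ‖(⇑f - ⇑g) (qPr α β p z.1 z.2)‖ₑ * wE α β p * wE α β z.1 ∂(volume.prod sphMeas)) +
           ∫⁻ z : E3 × Metric.sphere (0 : E3) 1, ‖(⇑f - ⇑g) (pPr α β p z.1 z.2)‖ₑ *
            ‖g (qPr α β p z.1 z.2)‖ₑ * wE α β p * wE α β z.1 ∂(volume.prod sphMeas))) := by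
          refine lintegral_mono_ae ?_
          filter_upwards [integrable_gainF hα' hβ' hS₀meas hS₀nonneg hS₀bdd hf
              (L1.integrable_coeFn f),
            integrable_gainF hα' hβ' hS₀meas hS₀nonneg hS₀bdd hg
              (L1.integrable_coeFn g)] with p hpf hpg
          rw [integral_gainF hpf, integral_gainF hpg, ← mul_sub, ← integral_sub hpf hpg,
            ← Real.norm_eq_abs, norm_norm, ofReal_norm, enorm_mul,
            Real.enorm_of_nonneg hc]
          gcongr
          refine (enorm_integral_le_lintegral_enorm _).trans ?_
          rw [← lintegral_add_left (by fun_prop), ← lintegral_const_mul _ (by fun_prop)]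
          exact lintegral_mono fun z => enorm_gainF_sub_le f g hS₀nonneg hS₀bdd p z
      _ = ENNReal.ofReal (α * β ^ 2) * (ENNReal.ofReal C₁ *
          ((∫⁻ p, ∫⁻ z : E3 × Metric.sphere (0 : E3) 1, ‖f (pPr α β p z.1 z.2)‖ₑ *
            ‖(⇑f - ⇑g) (qPr α β p z.1 z.2)‖ₑ * wE α β p * wE α β z.1 ∂(volume.prod sphMeas)) +
           ∫⁻ p, ∫⁻ z : E3 × Metric.sphere (0 : E3) 1, ‖(⇑f - ⇑g) (pPr α β p z.1 z.2)‖ₑ *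
            ‖g (qPr α β p z.1 z.2)‖ₑ * wE α β p * wE α β z.1 ∂(volume.prod sphMeas))) := by
          have m1 : Measurable fun p => ∫⁻ z : E3 × Metric.sphere (0 : E3) 1,
              ‖f (pPr α β p z.1 z.2)‖ₑ * ‖(⇑f - ⇑g) (qPr α β p z.1 z.2)‖ₑ *
                wE α β p * wE α β z.1 ∂(volume.prod sphMeas) :=
            Measurable.lintegral_prod_right'
              (f := fun y : E3 × E3 × Metric.sphere (0 : E3) 1 =>
                ‖f (pPr α β y.1 y.2.1 y.2.2)‖ₑ * ‖(⇑f - ⇑g) (qPr α β y.1 y.2.1 y.2.2)‖ₑ *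
                wE α β y.1 * wE α β y.2.1) (by fun_prop)
          rw [lintegral_const_mul' _ _ ENNReal.ofReal_ne_top,
            lintegral_const_mul' _ _ ENNReal.ofReal_ne_top, lintegral_add_left m1]
      _ ≤ ENNReal.ofReal (α * β ^ 2) * (ENNReal.ofReal C₁ *
          (ENNReal.ofReal (4 * Real.pi) * (ENNReal.ofReal ‖f‖ * ENNReal.ofReal ‖f - g‖) +
           ENNReal.ofReal (4 * Real.pi) * (ENNReal.ofReal ‖f - g‖ * ENNReal.ofReal ‖g‖))) := by
          gcongr
          · rw [← hnorm f, ← hnormd]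
            exact lintegral_gain_le hα' hβ' hf.enorm hd.enorm
          · rw [← hnorm g, ← hnormd]
            exact lintegral_gain_le hα' hβ' hd.enorm hg.enorm
      _ = _ := by
          have hpi := Real.pi_pos
          rw [← ENNReal.ofReal_mul (by positivity), ← ENNReal.ofReal_mul (by positivity),
            ← ENNReal.ofReal_mul (by positivity), ← ENNReal.ofReal_mul (by positivity),
            ← ENNReal.ofReal_add (by positivity) (by positivity),
            ← ENNReal.ofReal_mul (by positivity), ← ENNReal.ofReal_mul (by positivity)]
          congr 1; ring
  -- this bound of the Bochner integral needs no integrability of the left-hand side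
  refine (Real.le_norm_self _).trans ((norm_integral_le_lintegral_norm _).trans ?_)
  exact ENNReal.toReal_le_of_le_ofReal (by have := Real.pi_pos; positivity) hbound
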